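/- Let α be a type and let A, B be lists over α, both of length 2. Let i ≥ 2 be an integer, q ≥ 3 odd, k = 2^{i−1}·q, and m = (q+1)/2. Set L = d(k/2) and R = L + (|S(a(m−1))| + (i−1)·|S(m)|)/2. Then R > |S(a(m−1))|, where S = S_{A,B} and d is Stern's diatomic sequence. -/

import Mathlib

/-- Stern's diatomic sequence. -/
def stern : ℕ → ℕ
  | 0 => 0
  | 1 => 1
  | n + 2 =>
    if (n + 2) % 2 = 0 then stern ((n + 2) / 2)
    else stern ((n + 2) / 2) + stern ((n + 2) / 2 + 1)
decreasing_by all_goals omega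

/-- OEIS A003602: a(1)=1, a(2n)=a(n), a(2n+1)=n+1. (a(0)=0 as junk value.) -/
def aseq : ℕ → ℕ
  | 0 => 0
  | 1 => 1
  | n + 2 =>
    if (n + 2) % 2 = 0 then aseq ((n + 2) / 2)
    else (n + 2) / 2 + 1
decreasing_by all_goals omega

-- the modified sequence `a*`: zero at powers of two.
open Classical in
noncomputable def aStar (j : ℕ) : ℕ :=
  if ∃ k, j = 2 ^ k then 0 else aseq j

theorem aseq_le (n : ℕ) : aseq n ≤ n := by
  induction n using Nat.strong_induction_on with
  | _ n ih =>
    match n with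
    | 0 => simp [aseq]
    | 1 => simp [aseq]
    | m + 2 =>
      rw [aseq]
      split
      · exact le_trans (ih ((m + 2) / 2) (by omega)) (by omega)
      · omega

theorem aStar_le (j : ℕ) : aStar j ≤ j := by
  unfold aStar
  split
  · omega
  · exact aseq_le j

/-- The Markov-type sequence `S_{A,B}(n)`. -/
noncomputable def mseq {α : Type*} (A B : List α) : ℕ → List α
  | 0 => A
  | 1 => B
  | 2 => A ++ B
  | n + 3 =>
    if (n + 3) % 2 = 0 then
      mseq A B ((n + 3) / 2) ++ mseq A B (aseq ((n + 3) / 2))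
    else
      mseq A B (aStar ((n + 4) / 2 - 1)) ++ mseq A B ((n + 4) / 2)
decreasing_by
  all_goals first
    | omega
    | exact lt_of_le_of_lt (aseq_le _) (by omega)
    | exact lt_of_le_of_lt (aStar_le _) (by omega)

theorem stern_even (n : ℕ) : stern (2 * n) = stern n := by
  rcases n with _ | n
  · rfl
  · rw [show 2 * (n + 1) = 2 * n + 2 by ring, stern, if_pos (by omega)]
    congr 1
    omega

theorem stern_odd (n : ℕ) : stern (2 * n + 1) = stern n + stern (n + 1) := by
  rcases n with _ | n
  · simp [stern]
  · rw [show 2 * (n + 1) + 1 = (2 * n + 1) + 2 by ring, stern, if_neg (by omega)]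
    rw [show (2 * n + 1 + 2) / 2 = n + 1 by omega]

theorem aseq_even (n : ℕ) : aseq (2 * n) = aseq n := by
  rcases n with _ | n
  · rfl
  · rw [show 2 * (n + 1) = 2 * n + 2 by ring, aseq, if_pos (by omega)]
    congr 1
    omega

theorem aseq_odd (n : ℕ) : aseq (2 * n + 1) = n + 1 := by
  rcases n with _ | n
  · simp [aseq]
  · rw [show 2 * (n + 1) + 1 = (2 * n + 1) + 2 by ring, aseq, if_neg (by omega)]
    omega

theorem aseq_spec (n : ℕ) (hn : 1 ≤ n) :
    1 ≤ aseq n ∧ stern (2 * aseq n - 1) = stern n := by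
  induction n using Nat.strong_induction_on with
  | _ n ih =>
    rcases Nat.even_or_odd' n with ⟨c, rfl | rfl⟩
    · rw [aseq_even, stern_even]
      exact ih c (by omega) (by omega)
    · rw [aseq_odd]
      exact ⟨by omega, by congr 1⟩

theorem stern_pos (n : ℕ) (hn : 1 ≤ n) : 1 ≤ stern n := by
  induction n using Nat.strong_induction_on with
  | _ n ih =>
    rcases Nat.even_or_odd' n with ⟨c, rfl | rfl⟩
    · rw [stern_even]
      exact ih c (by omega) (by omega)
    · rcases c with _ | c
      · simp [stern]
      · rw [stern_odd]
        have := ih (c + 1) (by omega) (by omega)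
        omega

theorem stern_two_pow_mul (k n : ℕ) : stern (2 ^ k * n) = stern n := by
  induction k with
  | zero => simp
  | succ k ih => rw [pow_succ', mul_assoc, stern_even, ih]

theorem mseq_len {α : Type*} (A B : List α) (hA : A.length = 2) (hB : B.length = 2)
    (n : ℕ) (hn : 1 ≤ n) : (mseq A B n).length = 2 * stern (2 * n - 1) := by
  induction n using Nat.strong_induction_on with
  | _ n ih =>
    match n with
    | 1 => simp [mseq, hB, stern]
    | 2 => simp [mseq, hA, hB, stern]
    | n + 3 =>
      have key : ∀ j, 1 ≤ j → j < n + 3 →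
          (mseq A B (aseq j)).length = 2 * stern j := by
        intro j h1 h2
        obtain ⟨h3, h4⟩ := aseq_spec j h1
        rw [ih _ (lt_of_le_of_lt (aseq_le j) h2) h3, h4]
      rw [mseq]
      split
      · obtain ⟨j, hj⟩ : ∃ j, n + 3 = 2 * (j + 1) := ⟨(n + 1) / 2, by omega⟩
        rw [List.length_append, key _ (by omega) (by omega), ih _ (by omega) (by omega), hj,
          show 2 * (j + 1) / 2 = j + 1 by omega,
          show 2 * (2 * (j + 1)) - 1 = 2 * (2 * j + 1) + 1 by omega, stern_odd,
          show 2 * j + 1 + 1 = 2 * (j + 1) by ring, stern_even,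
          show 2 * (j + 1) - 1 = 2 * j + 1 by omega]
        ring
      · obtain ⟨j, hj⟩ : ∃ j, n + 3 = 2 * j + 1 := ⟨(n + 2) / 2, by omega⟩
        have hs : (mseq A B (aStar j)).length = 2 * stern j := by
          unfold aStar
          split
          · rename_i h
            obtain ⟨k, rfl⟩ := h
            have := stern_two_pow_mul k 1
            rw [mul_one] at this
            rw [this]
            simp [mseq, hA, stern]
          · exact key j (by omega) (by omega)
        rw [List.length_append, show (n + 4) / 2 = j + 1 by omega, Nat.add_sub_cancel, hs,
          ih _ (by omega) (by omega), hj,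
          show 2 * (2 * j + 1) - 1 = 2 * (2 * j) + 1 by omega, stern_odd, stern_even,
          show 2 * (j + 1) - 1 = 2 * j + 1 by omega]
        ring

/-- for `A`, `B` of length 2, `i ≥ 2`, odd `q ≥ 3`, `k = 2^{i−1}·q`,
`m = (q+1)/2`, `L = d(k/2)` and `R = L + (|S(a(m−1))| + (i−1)·|S(m)|)/2`,
one has `R > |S(a(m−1))|`. -/
theorem stmt14 {α : Type*} (A B : List α) (hA : A.length = 2) (hB : B.length = 2)
    (i q : ℕ) (hi : 2 ≤ i) (hq : 3 ≤ q) (hodd : Odd q) :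
    stern (2 ^ (i - 1) * q / 2) +
        ((mseq A B (aseq ((q + 1) / 2 - 1))).length +
            (i - 1) * (mseq A B ((q + 1) / 2)).length) / 2 >
      (mseq A B (aseq ((q + 1) / 2 - 1))).length := by
  obtain ⟨c, rfl⟩ := hodd
  obtain ⟨t, rfl⟩ : ∃ t, i = t + 2 := ⟨i - 2, by omega⟩
  obtain ⟨h3, h4⟩ := aseq_spec c (by omega)
  rw [show (2 * c + 1 + 1) / 2 = c + 1 by omega, Nat.add_sub_cancel,
    mseq_len A B hA hB _ h3, h4, mseq_len A B hA hB _ (by omega),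
    show 2 * (c + 1) - 1 = 2 * c + 1 by omega, show t + 2 - 1 = t + 1 by omega,
    show 2 ^ (t + 1) * (2 * c + 1) / 2 = 2 ^ t * (2 * c + 1) by
      rw [pow_succ', mul_assoc]; omega,
    stern_two_pow_mul,
    show 2 * stern c + (t + 1) * (2 * stern (2 * c + 1)) =
      2 * (stern c + (t + 1) * stern (2 * c + 1)) by ring,
    Nat.mul_div_cancel_left _ (by norm_num), stern_odd]
  have := stern_pos (c + 1) (by omega)
  nlinarith [Nat.zero_le (t * (stern c + stern (c + 1)))]
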